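/- Let S ⊂ V with vol(S) ≤ vol(V∖S) and φ(S) ≤ δ. Then for any ℓ ∈ ℕ and any 0 < θ ≤ 1/10, there exists T ⊆ S with vol(T) ≥ θ vol(S) such that every v ∈ T satisfies ‖W^ℓ(v,·) − π‖₂² > (1/(80 m⁷)) (1 − 4δ)^{2ℓ}. -/

import Mathlib

open Finset Matrix

/-- The lazy random walk matrix of a graph. -/
noncomputable def lazyWalk {V : Type*} [Fintype V] [DecidableEq V] (G : SimpleGraph V)
    [DecidableRel G.Adj] : Matrix V V ℝ :=
  fun u v => if u = v then 1 / 2 else if G.Adj u v then 1 / (2 * (G.degree v : ℝ)) else 0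

/-- The volume of a set of vertices: the sum of their degrees. -/
def gvol {V : Type*} [Fintype V] [DecidableEq V] (G : SimpleGraph V) [DecidableRel G.Adj]
    (S : Finset V) : ℕ :=
  ∑ v ∈ S, G.degree v

/-- The number of edges crossing from `S` to `T` (for disjoint `S`, `T`). -/
def gcut {V : Type*} [Fintype V] [DecidableEq V] (G : SimpleGraph V) [DecidableRel G.Adj]
    (S T : Finset V) : ℕ :=
  ((S ×ˢ T).filter (fun p => G.Adj p.1 p.2)).card

theorem spectral_aux {V : Type*} [Fintype V] [DecidableEq V] (N : Matrix V V ℝ) (hN : N.IsHermitian)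
    (hle : ∀ y : V → ℝ, y ⬝ᵥ (N *ᵥ y) ≤ y ⬝ᵥ y) (y ψ : V → ℝ) (δ : ℝ) (hδ0 : 0 < δ) (hδ : δ < 1/4)
    (hy : (1 - δ) * (y ⬝ᵥ y) ≤ y ⬝ᵥ (N *ᵥ y)) (hψ : N *ᵥ ψ = ψ) (hψy : ψ ⬝ᵥ y = 0) (l : ℕ) :
    ∃ z k : V → ℝ, N ^ l *ᵥ z = k ∧ (1 - 4 * δ) ^ (2 * l) * (z ⬝ᵥ z) ≤ y ⬝ᵥ y ∧
      (y - k) ⬝ᵥ (y - k) ≤ 1 / 4 * (y ⬝ᵥ y) ∧ ψ ⬝ᵥ z = 0 := by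
  classical
  set b := hN.eigenvectorBasis
  set ev := hN.eigenvalues
  let f : V → V → ℝ := fun i => (b i).ofLp
  have hNf : ∀ i, N *ᵥ f i = ev i • f i := fun i => hN.mulVec_eigenvectorBasis i
  have hsym : ∀ a c : V → ℝ, a ⬝ᵥ (N *ᵥ c) = (N *ᵥ a) ⬝ᵥ c := by
    intro a c
    have : Nᵀ = N := by
      have h := hN.eq
      rwa [conjTranspose_eq_transpose_of_trivial] at h
    rw [dotProduct_mulVec, ← mulVec_transpose, this]
  have hinn : ∀ a c : V → ℝ, inner ℝ (WithLp.toLp 2 a) (WithLp.toLp 2 c) = a ⬝ᵥ c := by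
    intro a c
    simp [EuclideanSpace.inner_eq_star_dotProduct, dotProduct_comm]
  have hpars : ∀ a c : V → ℝ, a ⬝ᵥ c = ∑ i, (a ⬝ᵥ f i) * (f i ⬝ᵥ c) := by
    intro a c
    rw [← hinn, ← b.sum_inner_mul_inner]
    refine Finset.sum_congr rfl fun i _ => ?_
    rw [← hinn, ← hinn]
  have horth : ∀ i j, f i ⬝ᵥ f j = if i = j then 1 else 0 := by
    intro i j
    rw [← hinn]
    exact orthonormal_iff_ite.mp b.orthonormal i j
  have hev : ∀ i, ev i ≤ 1 := by
    intro i
    have := hle (f i)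
    rw [hNf, dotProduct_smul, horth] at this
    simpa using this
  have hpow : ∀ i, N ^ l *ᵥ f i = ev i ^ l • f i := by
    intro i
    induction l with
    | zero => simp
    | succ n ih => rw [pow_succ, ← mulVec_mulVec, hNf, mulVec_smul, ih, smul_smul, pow_succ, mul_comm]
  let I : Finset V := univ.filter fun i => 1 - 4 * δ ≤ ev i
  have comb : ∀ (c : V → ℝ) (j : V), f j ⬝ᵥ (∑ i ∈ I, c i • f i) = if j ∈ I then c j else 0 := by
    intro c j
    rw [dotProduct_sum]
    simp [dotProduct_smul, horth]
  let cz : V → ℝ := fun i => (y ⬝ᵥ f i) * (ev i ^ l)⁻¹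
  refine ⟨∑ i ∈ I, cz i • f i, ∑ i ∈ I, (y ⬝ᵥ f i) • f i, ?_, ?_, ?_, ?_⟩
  · rw [mulVec_sum]
    refine Finset.sum_congr rfl fun i hi => ?_
    have h1 : 1 - 4 * δ ≤ ev i := (Finset.mem_filter.mp hi).2
    have : ev i ≠ 0 := by linarith
    rw [mulVec_smul, hpow, smul_smul]
    simp only [cz]
    congr 1
    field_simp
  · rw [hpars, hpars y y, Finset.mul_sum]
    refine Finset.sum_le_sum fun i _ => ?_
    rw [dotProduct_comm _ (f i), comb, dotProduct_comm (f i) y]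
    split_ifs with hi
    · have h1 : 1 - 4 * δ ≤ ev i := (Finset.mem_filter.mp hi).2
      have h2 : 0 < ev i := by linarith
      have h3 : (1 - 4 * δ) ^ (2 * l) ≤ ev i ^ (2 * l) := by
        gcongr; linarith
      have h4 : ev i ^ (2 * l) * (cz i * cz i) = (y ⬝ᵥ f i) * (y ⬝ᵥ f i) := by
        simp only [cz]; rw [two_mul, pow_add]; field_simp
      rw [← h4]
      exact mul_le_mul_of_nonneg_right h3 (mul_self_nonneg _)
    · simp [mul_self_nonneg]
  · have e1 : 4 * δ * ((y - ∑ i ∈ I, (y ⬝ᵥ f i) • f i) ⬝ᵥ (y - ∑ i ∈ I, (y ⬝ᵥ f i) • f i))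
        ≤ y ⬝ᵥ y - y ⬝ᵥ (N *ᵥ y) := by
      rw [hpars, hpars y y, hpars y (N *ᵥ y), Finset.mul_sum, ← Finset.sum_sub_distrib]
      refine Finset.sum_le_sum fun i _ => ?_
      rw [dotProduct_comm _ (f i), dotProduct_sub, comb, hsym (f i), hNf, smul_dotProduct,
        dotProduct_comm (f i) y]
      have h0 := mul_self_nonneg (y ⬝ᵥ f i)
      split_ifs with hi
      · have := hev i
        simp only [smul_eq_mul]
        nlinarith
      · have h1 : ¬ (1 - 4 * δ ≤ ev i) := fun h => hi (Finset.mem_filter.mpr ⟨Finset.mem_univ _, h⟩)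
        push Not at h1
        simp only [smul_eq_mul]
        nlinarith
    have : 4 * δ * ((y - ∑ i ∈ I, (y ⬝ᵥ f i) • f i) ⬝ᵥ (y - ∑ i ∈ I, (y ⬝ᵥ f i) • f i))
       ≤ 4 * δ * (1 / 4 * (y ⬝ᵥ y)) := by linarith
    exact le_of_mul_le_mul_left this (by linarith)
  · rw [hpars]
    rw [hpars] at hψy
    rw [← hψy]
    refine Finset.sum_congr rfl fun i _ => ?_
    rw [comb]
    have h1 : ψ ⬝ᵥ f i = ev i * (ψ ⬝ᵥ f i) := by
      conv_lhs => rw [← hψ, ← hsym, hNf, dotProduct_smul, smul_eq_mul]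
    by_cases h0 : ψ ⬝ᵥ f i = 0
    · simp [h0]
    · have h2 : ev i = 1 := by
        have : (ev i - 1) * (ψ ⬝ᵥ f i) = 0 := by linarith
        rcases mul_eq_zero.mp this with h | h
        · linarith
        · exact absurd h h0
      have : i ∈ I := by simp [I, h2, hδ0.le]
      simp [this, cz, h2, dotProduct_comm]

section aux
variable {V : Type*} [Fintype V] [DecidableEq V] (G : SimpleGraph V) [DecidableRel G.Adj]

/-- Real adjacency indicator. -/
noncomputable def adjR (u v : V) : ℝ := if G.Adj u v then 1 else 0

/-- Square root of the degree. -/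
noncomputable def rdeg (u : V) : ℝ := Real.sqrt (G.degree u)

/-- Symmetrized lazy walk. -/
noncomputable def symW : Matrix V V ℝ :=
  fun u v => (if u = v then 1 / 2 else 0) + adjR G u v / (2 * rdeg G u * rdeg G v)

theorem adjR_symm (u v : V) : adjR G u v = adjR G v u := by
  simp [adjR, G.adj_comm]

theorem adjR_sum (u : V) : ∑ v, adjR G u v = G.degree u := by
  simp [adjR, ← SimpleGraph.card_neighborFinset_eq_degree, SimpleGraph.neighborFinset_eq_filter]

theorem symW_herm : (symW G).IsHermitian := by
  ext u v
  simp only [symW, conjTranspose_apply, star_trivial]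
  rw [adjR_symm G u v, mul_right_comm]
  simp only [eq_comm]

theorem rdeg_sq (u : V) : rdeg G u * rdeg G u = G.degree u :=
  Real.mul_self_sqrt (Nat.cast_nonneg _)

theorem lazy_eq (hd : ∀ v, 0 < rdeg G v) (u v : V) :
    lazyWalk G u v * rdeg G v = rdeg G u * symW G u v := by
  have hu := hd u
  have hv := hd v
  simp only [lazyWalk, symW, adjR, ← rdeg_sq G v]
  by_cases h : u = v
  · subst h; simp; ring
  · by_cases h2 : G.Adj u v
    · simp [h, h2]; field_simp
    · simp [h, h2]

theorem lazy_pow_eq (hd : ∀ v, 0 < rdeg G v) (l : ℕ) (u v : V) :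
    (lazyWalk G ^ l) u v * rdeg G v = rdeg G u * (symW G ^ l) u v := by
  induction l generalizing u v with
  | zero =>
    by_cases h : u = v
    · subst h; simp
    · simp [h]
  | succ n ih =>
    rw [pow_succ, pow_succ, Matrix.mul_apply, Matrix.mul_apply, Finset.sum_mul, Finset.mul_sum]
    refine Finset.sum_congr rfl fun w _ => ?_
    rw [mul_assoc, lazy_eq G hd, ← mul_assoc, ih, mul_assoc]

theorem symW_mulVec (hd : ∀ v, 0 < rdeg G v) (x : V → ℝ) (u : V) :
    (symW G *ᵥ (fun v => rdeg G v * x v)) u * rdeg G u =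
      G.degree u * x u / 2 + (∑ v, adjR G u v * x v) / 2 := by
  simp only [mulVec, dotProduct, symW, add_mul, Finset.sum_add_distrib]
  congr 1
  · simp [ite_mul]; rw [← rdeg_sq]; ring
  · rw [Finset.sum_mul, Finset.sum_div]
    refine Finset.sum_congr rfl fun v _ => ?_
    have := hd u
    have := hd v
    field_simp

theorem energy (hd : ∀ v, 0 < rdeg G v) (x : V → ℝ) :
    (fun v => rdeg G v * x v) ⬝ᵥ (fun v => rdeg G v * x v) -
    (fun v => rdeg G v * x v) ⬝ᵥ (symW G *ᵥ (fun v => rdeg G v * x v)) =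
      1 / 4 * ∑ u, ∑ v, adjR G u v * (x u - x v) ^ 2 := by
  have h1 : (fun v => rdeg G v * x v) ⬝ᵥ (fun v => rdeg G v * x v) =
      ∑ u, G.degree u * x u ^ 2 := by
    simp only [dotProduct]
    refine Finset.sum_congr rfl fun v _ => ?_
    rw [← rdeg_sq]; ring
  have h2 : (fun v => rdeg G v * x v) ⬝ᵥ (symW G *ᵥ (fun v => rdeg G v * x v)) =
      ∑ u, (G.degree u * x u ^ 2 / 2 + (∑ v, adjR G u v * (x u * x v)) / 2) := by
    rw [dotProduct]
    refine Finset.sum_congr rfl fun u _ => ?_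
    rw [mul_comm (rdeg G u), mul_assoc, mul_comm (rdeg G u), symW_mulVec G hd, mul_add]
    congr 1
    · ring
    · rw [mul_div_assoc', Finset.mul_sum]
      congr 1
      refine Finset.sum_congr rfl fun v _ => ?_
      ring
  have h3 : ∑ u, ∑ v, adjR G u v * x u ^ 2 = ∑ u, G.degree u * x u ^ 2 := by
    refine Finset.sum_congr rfl fun u _ => ?_
    rw [← Finset.sum_mul, adjR_sum]
  have h4 : ∑ u, ∑ v, adjR G u v * x v ^ 2 = ∑ u, G.degree u * x u ^ 2 := by
    rw [Finset.sum_comm, ← h3]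
    refine Finset.sum_congr rfl fun u _ => Finset.sum_congr rfl fun v _ => ?_
    rw [adjR_symm]
  have h5 : ∑ u, ∑ v, adjR G u v * (x u - x v) ^ 2 = ∑ u, ∑ v, adjR G u v * x u ^ 2
      + ∑ u, ∑ v, adjR G u v * x v ^ 2 - 2 * ∑ u, ∑ v, adjR G u v * (x u * x v) := by
    simp only [Finset.mul_sum, ← Finset.sum_add_distrib, ← Finset.sum_sub_distrib]
    refine Finset.sum_congr rfl fun u _ => Finset.sum_congr rfl fun v _ => ?_
    ring
  rw [h5, h3, h4, h1, h2, Finset.sum_add_distrib, ← Finset.sum_div, ← Finset.sum_div]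
  ring

theorem energy_cut (S : Finset V) (p : ℝ) :
    ∑ u, ∑ v, adjR G u v * (((if u ∈ S then 1 else 0) - p) - ((if v ∈ S then 1 else 0) - p)) ^ 2
      = 2 * (gcut G S Sᶜ : ℝ) := by
  have h1 : (gcut G S Sᶜ : ℝ) = ∑ u, ∑ v, if u ∈ S ∧ v ∉ S then adjR G u v else 0 := by
    rw [gcut, Finset.card_filter, Finset.sum_product]
    push_cast
    rw [← Finset.sum_filter_add_sum_filter_not univ (fun u => u ∈ S)]
    rw [Finset.sum_eq_zero (s := univ.filter fun u => u ∉ S), add_zero]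
    · simp only [Finset.filter_mem_eq_inter, Finset.univ_inter]
      refine Finset.sum_congr rfl fun u hu => ?_
      simp only [hu, true_and, ← Finset.sum_filter, adjR]
      refine Finset.sum_congr ?_ fun _ _ => rfl
      ext; simp
    · intro u hu
      simp at hu
      simp [hu]
  have h2 : (gcut G S Sᶜ : ℝ) = ∑ u, ∑ v, if v ∈ S ∧ u ∉ S then adjR G u v else 0 := by
    rw [h1, Finset.sum_comm]
    refine Finset.sum_congr rfl fun u _ => Finset.sum_congr rfl fun v _ => ?_
    rw [adjR_symm]
  rw [two_mul]
  nth_rw 1 [h1]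
  rw [h2]
  simp only [← Finset.sum_add_distrib]
  refine Finset.sum_congr rfl fun u _ => Finset.sum_congr rfl fun v _ => ?_
  by_cases hu : u ∈ S <;> by_cases hv : v ∈ S <;> simp [hu, hv]
  ring

end aux

/-- If `S ⊂ V` has `vol S ≤ vol S̄` and `φ(S) ≤ δ`, then for any `ℓ` and any `0 < θ ≤ 1/10`
there exists `T ⊆ S` with `vol T ≥ θ vol S` such that every `v ∈ T` satisfies
`‖W^ℓ(v,·) − π‖₂² > (1/(80 m⁷)) (1 − 4δ)^{2ℓ}`. -/
theorem stmt9 {V : Type*} [Fintype V] [DecidableEq V] (G : SimpleGraph V) [DecidableRel G.Adj]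
    (hconn : G.Connected) (m : ℕ) (hm : m = G.edgeFinset.card) (hm1 : 1 ≤ m)
    (δ : ℝ) (hδ0 : 0 < δ) (hδ : δ < 1 / 4)
    (S : Finset V) (hS : S.Nonempty) (hSproper : S ≠ Finset.univ)
    (hvol : gvol G S ≤ gvol G Sᶜ)
    (hφ : (gcut G S Sᶜ : ℝ) ≤ δ * (gvol G S : ℝ))
    (ℓ : ℕ) (θ : ℝ) (hθ0 : 0 < θ) (hθ : θ ≤ 1 / 10) :
    ∃ T ⊆ S, θ * (gvol G S : ℝ) ≤ (gvol G T : ℝ) ∧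
      ∀ v ∈ T, 1 / (80 * (m : ℝ) ^ 7) * (1 - 4 * δ) ^ (2 * ℓ)
        < ∑ u, ((lazyWalk G ^ ℓ) u v - (G.degree u : ℝ) / (2 * (m : ℝ))) ^ 2 := by
  classical
  have hnt : Nontrivial V := by
    obtain ⟨a, ha⟩ := hS
    obtain ⟨c, hc⟩ : ∃ c, c ∉ S := by
      by_contra h
      push Not at h
      exact hSproper (Finset.eq_univ_iff_forall.mpr h)
    exact ⟨a, c, fun h => hc (h ▸ ha)⟩
  have hdeg : ∀ v, 0 < G.degree v := fun v => hconn.preconnected.degree_pos_of_nontrivial v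
  have hdeg1 : ∀ v, (1 : ℝ) ≤ G.degree v := fun v => by exact_mod_cast hdeg v
  have hd : ∀ v, 0 < rdeg G v := fun v => Real.sqrt_pos.mpr (by exact_mod_cast hdeg v)
  have hmR : (1 : ℝ) ≤ m := by exact_mod_cast hm1
  have htot : ∑ v, (G.degree v : ℝ) = 2 * m := by
    rw [hm]; exact_mod_cast G.sum_degrees_eq_twice_card_edges
  have hvS : (gvol G S : ℝ) = ∑ v ∈ S, (G.degree v : ℝ) := by simp [gvol]
  have hvSm : (gvol G S : ℝ) ≤ m := by
    have h1 : gvol G S + gvol G Sᶜ = 2 * m := by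
      rw [gvol, gvol, Finset.sum_add_sum_compl, G.sum_degrees_eq_twice_card_edges, hm]
    have : gvol G S ≤ m := by omega
    exact_mod_cast this
  set vS : ℝ := (gvol G S : ℝ) with hvSdef
  have hvSpos : 0 < vS := by
    rw [hvS]; exact Finset.sum_pos (fun v _ => by linarith [hdeg1 v]) hS
  set p : ℝ := vS / (2 * m) with hp
  have hp0 : 0 < p := by positivity
  have hp2 : p ≤ 1 / 2 := by
    rw [hp, div_le_iff₀ (by linarith)]; linarith
  have hpm : p * (2 * m) = vS := by rw [hp]; field_simp
  set x : V → ℝ := fun u => (if u ∈ S then 1 else 0) - p with hx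
  set y : V → ℝ := fun v => rdeg G v * x v with hy
  have hsumx : ∑ v, (G.degree v : ℝ) * x v = 0 := by
    simp only [hx, mul_sub, Finset.sum_sub_distrib, ← Finset.sum_mul, htot]
    simp [← hvS]; linarith
  have hyy : y ⬝ᵥ y = vS * (1 - p) := by
    have : y ⬝ᵥ y = ∑ v, ((if v ∈ S then (G.degree v : ℝ) else 0) - p * (G.degree v * x v)
        - p * (if v ∈ S then (G.degree v : ℝ) else 0)) := by
      simp only [dotProduct]
      refine Finset.sum_congr rfl fun v _ => ?_
      have := rdeg_sq G v
      simp only [hy, hx]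
      rw [← this]
      split_ifs <;> ring
    rw [this, Finset.sum_sub_distrib, Finset.sum_sub_distrib, ← Finset.mul_sum, ← Finset.mul_sum,
      hsumx]
    simp [← hvS]; ring
  have hle : ∀ w : V → ℝ, w ⬝ᵥ (symW G *ᵥ w) ≤ w ⬝ᵥ w := by
    intro w
    have h := energy G hd (fun v => w v / rdeg G v)
    have e : (fun v => rdeg G v * (w v / rdeg G v)) = w := by
      ext v; have := hd v; field_simp
    rw [e] at h
    have : 0 ≤ ∑ u, ∑ v, adjR G u v * (w u / rdeg G u - w v / rdeg G v) ^ 2 := by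
      refine Finset.sum_nonneg fun u _ => Finset.sum_nonneg fun v _ => mul_nonneg ?_ (sq_nonneg _)
      unfold adjR; split_ifs <;> norm_num
    linarith
  have hyN : (1 - δ) * (y ⬝ᵥ y) ≤ y ⬝ᵥ (symW G *ᵥ y) := by
    have h := energy G hd x
    rw [energy_cut G S p] at h
    have h2 : δ * (vS * (1 / 2)) ≤ δ * (vS * (1 - p)) := by gcongr; linarith
    change y ⬝ᵥ y - y ⬝ᵥ (symW G *ᵥ y) = _ at h
    rw [← hyy] at h2
    linarith
  have hψ : symW G *ᵥ (rdeg G) = rdeg G := by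
    ext u
    have h := symW_mulVec G hd (fun _ => 1) u
    simp only [mul_one, adjR_sum] at h
    have h2 := hd u
    refine mul_right_cancel₀ h2.ne' (h.trans ?_)
    rw [rdeg_sq]; ring
  have hψy : rdeg G ⬝ᵥ y = 0 := by
    rw [← hsumx, dotProduct]
    refine Finset.sum_congr rfl fun v _ => ?_
    rw [← rdeg_sq]; simp only [hy]; ring
  obtain ⟨z, k, hzk, hz, hk, hψz⟩ := spectral_aux (symW G) (symW_herm G) hle y (rdeg G) δ hδ0 hδ hyN
    hψ hψy ℓ
  have hkey : ∀ v, ∑ u, ((lazyWalk G ^ ℓ) u v - (G.degree u : ℝ) / (2 * (m : ℝ))) *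
      (z u / rdeg G u) = k v / rdeg G v := by
    intro v
    have hv := hd v
    have hsy : ∀ u, (symW G ^ ℓ) u v = (symW G ^ ℓ) v u := fun u => by
      have := ((symW_herm G).pow ℓ).apply v u
      simpa using this
    have h1 : ∑ u, ((G.degree u : ℝ) / (2 * (m : ℝ))) * (z u / rdeg G u) = 0 := by
      have : ∑ u, ((G.degree u : ℝ) / (2 * (m : ℝ))) * (z u / rdeg G u) =
          1 / (2 * m) * (rdeg G ⬝ᵥ z) := by
        rw [dotProduct, Finset.mul_sum]
        refine Finset.sum_congr rfl fun u _ => ?_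
        have := hd u
        rw [← rdeg_sq]; field_simp
      rw [this, hψz, mul_zero]
    simp only [sub_mul, Finset.sum_sub_distrib]
    rw [h1, sub_zero, ← hzk, mulVec, dotProduct, Finset.sum_div]
    refine Finset.sum_congr rfl fun u _ => ?_
    have hu := hd u
    have h2 := lazy_pow_eq G hd ℓ u v
    rw [hsy] at h2
    have h3 : (lazyWalk G ^ ℓ) u v = rdeg G u * (symW G ^ ℓ) v u / rdeg G v := by
      rw [← h2]; field_simp
    rw [h3]; field_simp
  have hh : ∑ u, (z u / rdeg G u) ^ 2 ≤ z ⬝ᵥ z := by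
    rw [dotProduct]
    refine Finset.sum_le_sum fun u _ => ?_
    rw [div_pow, sq (rdeg G u), rdeg_sq, ← sq]
    exact div_le_self (sq_nonneg _) (hdeg1 u)
  have hr : 0 < (1 - 4 * δ) ^ (2 * ℓ) := pow_pos (by linarith) _
  refine ⟨S.filter fun v => 1 / (80 * (m : ℝ) ^ 7) * (1 - 4 * δ) ^ (2 * ℓ)
        < ∑ u, ((lazyWalk G ^ ℓ) u v - (G.degree u : ℝ) / (2 * (m : ℝ))) ^ 2,
    Finset.filter_subset _ _, ?_, fun v hv => (Finset.mem_filter.mp hv).2⟩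
  by_contra hcon
  push Not at hcon
  set Q : V → Prop := fun v => 1 / (80 * (m : ℝ) ^ 7) * (1 - 4 * δ) ^ (2 * ℓ)
        < ∑ u, ((lazyWalk G ^ ℓ) u v - (G.degree u : ℝ) / (2 * (m : ℝ))) ^ 2 with hQ
  have hB : 9 / 10 * vS ≤ ∑ v ∈ S.filter (fun v => ¬ Q v), (G.degree v : ℝ) := by
    have h1 := Finset.sum_filter_add_sum_filter_not S Q (fun v => (G.degree v : ℝ))
    rw [← hvS] at h1
    have h2 : (gvol G (S.filter Q) : ℝ) = ∑ v ∈ S.filter Q, (G.degree v : ℝ) := by simp [gvol]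
    have h3 : θ * vS ≤ 1 / 10 * vS := by gcongr
    rw [h2] at hcon
    linarith
  have hbad : ∀ v ∈ S.filter (fun v => ¬ Q v),
      (G.degree v : ℝ) * (1 - p - 112 / 1000) ^ 2 ≤ (y v - k v) * (y v - k v) := by
    intro v hv
    obtain ⟨hvS', hvQ⟩ := Finset.mem_filter.mp hv
    rw [hQ] at hvQ
    simp only [not_lt] at hvQ
    have hcs := Finset.sum_mul_sq_le_sq_mul_sq univ
      (fun u => (lazyWalk G ^ ℓ) u v - (G.degree u : ℝ) / (2 * (m : ℝ))) (fun u => z u / rdeg G u)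
    rw [hkey v] at hcs
    have h1 : (k v / rdeg G v) ^ 2 ≤ 1 / 80 := by
      calc (k v / rdeg G v) ^ 2 ≤ _ := hcs
        _ ≤ (1 / (80 * (m : ℝ) ^ 7) * (1 - 4 * δ) ^ (2 * ℓ)) * (z ⬝ᵥ z) :=
            mul_le_mul hvQ hh (Finset.sum_nonneg fun _ _ => sq_nonneg _) (by positivity)
        _ = 1 / (80 * (m : ℝ) ^ 7) * ((1 - 4 * δ) ^ (2 * ℓ) * (z ⬝ᵥ z)) := by ring
        _ ≤ 1 / (80 * (m : ℝ) ^ 7) * (m : ℝ) ^ 7 := by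
            gcongr
            refine hz.trans ?_
            rw [hyy]
            have : (m : ℝ) ≤ (m : ℝ) ^ 7 := le_self_pow₀ hmR (by norm_num)
            nlinarith
        _ = 1 / 80 := by field_simp
    have h2 : k v / rdeg G v ≤ 112 / 1000 := by nlinarith
    have hv0 := hd v
    have h3 : (y v - k v) * (y v - k v) = (G.degree v : ℝ) * (1 - p - k v / rdeg G v) ^ 2 := by
      rw [← rdeg_sq]
      simp only [hy, hx, hvS', if_true]
      field_simp
    rw [h3]
    gcongr
    linarith
  have hlow : 9 / 10 * vS * (1 - p - 112 / 1000) ^ 2 ≤ (y - k) ⬝ᵥ (y - k) := by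
    calc _ ≤ (∑ v ∈ S.filter (fun v => ¬ Q v), (G.degree v : ℝ)) * (1 - p - 112 / 1000) ^ 2 := by
          gcongr
      _ = ∑ v ∈ S.filter (fun v => ¬ Q v), (G.degree v : ℝ) * (1 - p - 112 / 1000) ^ 2 :=
          Finset.sum_mul _ _ _
      _ ≤ ∑ v ∈ S.filter (fun v => ¬ Q v), (y v - k v) * (y v - k v) := Finset.sum_le_sum hbad
      _ ≤ ∑ v, (y v - k v) * (y v - k v) :=
          Finset.sum_le_sum_of_subset_of_nonneg (Finset.subset_univ _)
            fun _ _ _ => mul_self_nonneg _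
      _ = _ := rfl
  rw [hyy] at hk
  have hfin : 1 / 4 * (1 - p) < 9 / 10 * (1 - p - 112 / 1000) ^ 2 := by nlinarith
  have := mul_lt_mul_of_pos_left hfin hvSpos
  linarith
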